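/- arXiv:0807.2280 — 2 statements merged into one kernel-verified Lean document; each statement's English description precedes it below -/
import Mathlib

section
/- Bilaplacian of the scaled multiplier in dimension n ≥ 4: Let n ≥ 4, M ≥ 1, R > 0. Then for every x with 0 < |x| < R, Δ²φ_R(x) = −(1/R³ + M(n−1)(n−3)/|x|³), and for every x with |x| > R, Δ²φ_R(x) = −(M + 1/(2n))·(n−1)(n−3)/|x|³. In particular Δ²φ_R(x) ≤ 0 for every x with |x| ∉ {0, R}. -/
/-!
For a radial function `F(|x|)` one has `Δ (F(|·|)) = F'' + (n - 1) F' / r` away from the origin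
(`lap_radial`). Since `φ₀'` is continuous, also across `r = 1`, the fundamental theorem of calculus
gives `∂ᵣ φ_R = φ₀'(r / R)` (`hasDerivAt_phiR_profile`), so one application of the radial formula
yields, with `r = |x|`,

* `Δφ_R = (1 / R) (1 / 2 - r² / (2 n R²)) + (n - 1) M / r` for `0 < r < R`,
* `Δφ_R = (n - 1) (M + 1 / (2 n)) / r` for `r > R`; the term `r ^ (1 - n)` of `φ₀'` drops out, its
  primitive being harmonic.

Both are instances of `a - b r² + c / r`, whose Laplacian is `-2 n b - (n - 3) c / r³`
(`lap_of_eventuallyEq`), which gives the two formulas; their sign is clear for `n ≥ 4`.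
-/

open MeasureTheory
open scoped BigOperators

noncomputable section

/-- The partial derivative `∂ₖ f` of a real-valued function. -/
noncomputable def pdR {n : ℕ} (f : EuclideanSpace ℝ (Fin n) → ℝ) (k : Fin n)
    (x : EuclideanSpace ℝ (Fin n)) : ℝ :=
  fderiv ℝ f x (EuclideanSpace.single k 1)

/-- The Laplacian `Δf = Σₖ ∂ₖ∂ₖ f` of a real-valued function. -/
noncomputable def lap {n : ℕ} (f : EuclideanSpace ℝ (Fin n) → ℝ)
    (x : EuclideanSpace ℝ (Fin n)) : ℝ :=
  ∑ k, pdR (pdR f k) k x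

/-- The derivative `φ₀'` of the basic radial multiplier. -/
noncomputable def gmult (n : ℕ) (M : ℝ) (r : ℝ) : ℝ :=
  if r ≤ 1 then M + r / (2 * n) - r ^ 3 / (2 * n * (n + 2))
  else M + 1 / (2 * n) - 1 / (2 * n * (n + 2) * r ^ (n - 1))

/-- The basic radial multiplier `φ₀(r) = ∫₀ʳ φ₀'(s) ds`. -/
noncomputable def phi0 (n : ℕ) (M : ℝ) (r : ℝ) : ℝ :=
  ∫ s in (0:ℝ)..r, gmult n M s

/-- The scaled multiplier `φ_R(x) = R φ₀(|x|/R)`. -/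
noncomputable def phiR (n : ℕ) (M R : ℝ) (x : EuclideanSpace ℝ (Fin n)) : ℝ :=
  R * phi0 n M (‖x‖ / R)

open Filter Topology

lemma hasFDerivAt_norm_euclidean {n : ℕ} {x : EuclideanSpace ℝ (Fin n)} (hx : x ≠ 0) :
    HasFDerivAt (fun y : EuclideanSpace ℝ (Fin n) => ‖y‖) (‖x‖⁻¹ • innerSL ℝ x) x := by
  have hx' : ‖x‖ ≠ 0 := norm_ne_zero_iff.mpr hx
  have h := (hasStrictFDerivAt_norm_sq x).hasFDerivAt.sqrt (pow_ne_zero 2 hx')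
  simp only [Real.sqrt_sq (norm_nonneg _)] at h
  refine h.congr_fderiv ?_
  ext v
  simp
  field_simp

lemma pdR_radial {n : ℕ} {f : EuclideanSpace ℝ (Fin n) → ℝ} {F : ℝ → ℝ} {d : ℝ}
    {x : EuclideanSpace ℝ (Fin n)} (hx : x ≠ 0) (hf : f =ᶠ[𝓝 x] fun y => F ‖y‖)
    (hF : HasDerivAt F d ‖x‖) (k : Fin n) : pdR f k x = d * (x k * ‖x‖⁻¹) := by
  have h := hF.comp_hasFDerivAt x (hasFDerivAt_norm_euclidean hx)
  have h2 := h.congr_of_eventuallyEq hf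
  rw [pdR, h2.fderiv]
  simp only [smul_apply, innerSL_apply_apply, EuclideanSpace.inner_single_right,
    smul_eq_mul, one_mul, conj_trivial]
  ring

/-- The Laplacian in polar coordinates of a function that is radial near `x ≠ 0`. -/
lemma lap_radial {n : ℕ} {f : EuclideanSpace ℝ (Fin n) → ℝ} {F F' : ℝ → ℝ} {d : ℝ}
    {x : EuclideanSpace ℝ (Fin n)} (hx : x ≠ 0) (hf : f =ᶠ[𝓝 x] fun y => F ‖y‖)
    (hF : ∀ᶠ r in 𝓝 ‖x‖, HasDerivAt F (F' r) r) (hF' : HasDerivAt F' d ‖x‖) :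
    lap f x = d + ((n : ℝ) - 1) * F' ‖x‖ / ‖x‖ := by
  have hx' : ‖x‖ ≠ 0 := norm_ne_zero_iff.mpr hx
  have key : ∀ k : Fin n, pdR (pdR f k) k x
      = d * (x k ^ 2 / ‖x‖ ^ 2) + F' ‖x‖ * (1 / ‖x‖ - x k ^ 2 / ‖x‖ ^ 3) := by
    intro k
    have hfirst : pdR f k =ᶠ[𝓝 x] fun y => F' ‖y‖ * (y k * ‖y‖⁻¹) := by
      filter_upwards [hf.eventually_nhds, continuous_norm.continuousAt.eventually hF,
        isOpen_ne.mem_nhds hx] with y hfy hFy hy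
      exact pdR_radial hy hfy hFy k
    have hnorm := hasFDerivAt_norm_euclidean hx
    have hcoord : HasFDerivAt (fun y : EuclideanSpace ℝ (Fin n) => y k)
        (EuclideanSpace.proj (𝕜 := ℝ) k) x :=
      (EuclideanSpace.proj (𝕜 := ℝ) k).hasFDerivAt
    have h := (hF'.comp_hasFDerivAt x hnorm).mul
      (hcoord.mul ((hasDerivAt_inv hx').comp_hasFDerivAt x hnorm))
    rw [pdR, (h.congr_of_eventuallyEq hfirst).fderiv]
    simp [EuclideanSpace.inner_single_right]
    field_simp
    ring
  have hsum : ∑ k, x k ^ 2 = ‖x‖ ^ 2 := by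
    rw [EuclideanSpace.norm_sq_eq]
    simp
  rw [lap, Finset.sum_congr rfl fun k _ => key k, Finset.sum_add_distrib, ← Finset.mul_sum,
    ← Finset.mul_sum, Finset.sum_sub_distrib, Finset.sum_const, Finset.card_univ, Fintype.card_fin,
    nsmul_eq_mul, ← Finset.sum_div, ← Finset.sum_div, hsum]
  field_simp

/-- Both expressions for `Δφ_R` have the form `a - b r² + c / r`. -/
lemma lap_of_eventuallyEq {n : ℕ} {f : EuclideanSpace ℝ (Fin n) → ℝ} {a b c : ℝ}
    {x : EuclideanSpace ℝ (Fin n)} (hx : x ≠ 0)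
    (hf : f =ᶠ[𝓝 x] fun y => a - b * ‖y‖ ^ 2 + c / ‖y‖) :
    lap f x = -(2 * n * b + ((n : ℝ) - 3) * c / ‖x‖ ^ 3) := by
  have hx' : ‖x‖ ≠ 0 := norm_ne_zero_iff.mpr hx
  have hF : ∀ r : ℝ, r ≠ 0 → HasDerivAt (fun r : ℝ => a - b * r ^ 2 + c / r)
      (-(2 * b * r) - c / r ^ 2) r := by
    intro r hr
    refine ((((hasDerivAt_pow 2 r).const_mul b).const_sub a).add
      ((hasDerivAt_const r c).div (hasDerivAt_id r) hr)).congr_deriv ?_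
    simp
    ring
  have hF' : HasDerivAt (fun r : ℝ => -(2 * b * r) - c / r ^ 2)
      (-(2 * b) + 2 * c / ‖x‖ ^ 3) ‖x‖ := by
    refine (((hasDerivAt_id ‖x‖).const_mul (2 * b)).neg.sub
      ((hasDerivAt_const ‖x‖ c).div (hasDerivAt_pow 2 ‖x‖) (pow_ne_zero 2 hx'))).congr_deriv ?_
    simp
    field_simp
    ring
  rw [lap_radial (F := fun r : ℝ => a - b * r ^ 2 + c / r) hx hf
    ((isOpen_ne.eventually_mem hx').mono hF) hF']
  field_simp
  ring

lemma continuous_gmult {n : ℕ} (hn : 4 ≤ n) (M : ℝ) : Continuous (gmult n M) := by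
  have hn0 : (n : ℝ) ≠ 0 := by positivity
  have hn2 : (n : ℝ) + 2 ≠ 0 := by positivity
  unfold gmult
  refine continuous_if_le continuous_id continuous_const (by fun_prop) ?_ ?_
  · intro r hr
    have hr' : (1 : ℝ) ≤ r := hr
    have hr0 : r ≠ 0 := by positivity
    have : 2 * (n : ℝ) * (n + 2) * r ^ (n - 1) ≠ 0 := by positivity
    exact ContinuousAt.continuousWithinAt (by fun_prop (disch := assumption))
  · rintro r rfl
    simp

/-- The radial derivative of `φ_R` is `φ₀'(r / R)`. -/
lemma hasDerivAt_phiR_profile {n : ℕ} (hn : 4 ≤ n) (M : ℝ) {R : ℝ} (hR : 0 < R) (r : ℝ) :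
    HasDerivAt (fun r => R * phi0 n M (r / R)) (gmult n M (r / R)) r := by
  have h1 : HasDerivAt (phi0 n M) (gmult n M (r / R)) (r / R) :=
    ((continuous_gmult hn M).integral_hasStrictDerivAt 0 (r / R)).hasDerivAt
  have h2 := (h1.comp r ((hasDerivAt_id r).div_const R)).const_mul R
  refine h2.congr_deriv ?_
  field_simp

lemma lap_phiR {n : ℕ} (hn : 4 ≤ n) (M : ℝ) {R : ℝ} (hR : 0 < R) {d : ℝ}
    {x : EuclideanSpace ℝ (Fin n)} (hx : x ≠ 0)
    (hd : HasDerivAt (fun r => gmult n M (r / R)) d ‖x‖) :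
    lap (phiR n M R) x = d + ((n : ℝ) - 1) * gmult n M (‖x‖ / R) / ‖x‖ :=
  lap_radial hx (F := fun r => R * phi0 n M (r / R)) .rfl
    (.of_forall (hasDerivAt_phiR_profile hn M hR)) hd

lemma lap_phiR_inner {n : ℕ} (hn : 4 ≤ n) (M : ℝ) {R : ℝ} (hR : 0 < R)
    {x : EuclideanSpace ℝ (Fin n)} (hx : x ≠ 0) (hxR : ‖x‖ < R) :
    lap (phiR n M R) x
      = 1 / (2 * R) - 1 / (2 * n * R ^ 3) * ‖x‖ ^ 2 + ((n : ℝ) - 1) * M / ‖x‖ := by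
  have hx' : ‖x‖ ≠ 0 := norm_ne_zero_iff.mpr hx
  have hn0 : (n : ℝ) ≠ 0 := by positivity
  have hn2 : (n : ℝ) + 2 ≠ 0 := by positivity
  have hg : ∀ r < R, gmult n M (r / R)
      = M + (r / R) / (2 * n) - (r / R) ^ 3 / (2 * n * (n + 2)) := by
    intro r hr
    rw [gmult, if_pos ((div_le_one hR).mpr hr.le)]
  have hid : HasDerivAt (fun r : ℝ => r / R) (1 / R) ‖x‖ := (hasDerivAt_id ‖x‖).div_const R
  have hd := (((hid.div_const (2 * (n : ℝ))).const_add M).sub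
    ((hid.pow 3).div_const (2 * (n : ℝ) * (n + 2)))).congr_of_eventuallyEq
      (f₁ := fun r => gmult n M (r / R)) ((eventually_lt_nhds hxR).mono hg)
  rw [lap_phiR hn M hR hx hd, hg _ hxR]
  simp
  field_simp
  ring

lemma lap_phiR_outer {n : ℕ} (hn : 4 ≤ n) (M : ℝ) {R : ℝ} (hR : 0 < R)
    {x : EuclideanSpace ℝ (Fin n)} (hxR : R < ‖x‖) :
    lap (phiR n M R) x = ((n : ℝ) - 1) * (M + 1 / (2 * n)) / ‖x‖ := by
  have hpos : 0 < ‖x‖ := hR.trans hxR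
  have hx : x ≠ 0 := norm_pos_iff.mp hpos
  have hn0 : (n : ℝ) ≠ 0 := by positivity
  have hn2 : (n : ℝ) + 2 ≠ 0 := by positivity
  have hg : ∀ r > R, gmult n M (r / R)
      = M + 1 / (2 * n) - (2 * (n : ℝ) * (n + 2) * (r / R) ^ (n - 1))⁻¹ := by
    intro r hr
    rw [gmult, if_neg (not_le.mpr ((one_lt_div hR).mpr hr)), one_div (2 * (n : ℝ) * (n + 2) * _)]
  have hid : HasDerivAt (fun r : ℝ => r / R) (1 / R) ‖x‖ := (hasDerivAt_id ‖x‖).div_const R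
  have hd := ((((hid.pow (n - 1)).const_mul (2 * (n : ℝ) * (n + 2))).inv
    (by rw [Pi.pow_apply]; positivity)).const_sub (M + 1 / (2 * (n : ℝ)))).congr_of_eventuallyEq
      (f₁ := fun r => gmult n M (r / R)) ((eventually_gt_nhds hxR).mono hg)
  rw [lap_phiR hn M hR hx hd, hg _ hxR]
  -- `n = m + 2` removes the truncated subtractions `n - 1` and `n - 1 - 1` in the exponents.
  obtain ⟨m, rfl⟩ : ∃ m, n = m + 2 := ⟨n - 2, by lia⟩
  simp only [show m + 2 - 1 = m + 1 by lia, Nat.add_sub_cancel, Pi.pow_apply]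
  obtain ⟨s, hs0, hs⟩ : ∃ s : ℝ, s ≠ 0 ∧ ‖x‖ = s * R :=
    ⟨‖x‖ / R, by positivity, by field_simp⟩
  rw [hs, mul_div_cancel_right₀ s hR.ne']
  push_cast at hn0 hn2 ⊢
  field_simp
  ring

lemma bilap_phiR_inner {n : ℕ} (hn : 4 ≤ n) (M : ℝ) {R : ℝ} (hR : 0 < R)
    {x : EuclideanSpace ℝ (Fin n)} (hx : 0 < ‖x‖) (hxR : ‖x‖ < R) :
    lap (lap (phiR n M R)) x
      = -(1 / R ^ 3 + M * ((n : ℝ) - 1) * ((n : ℝ) - 3) / ‖x‖ ^ 3) := by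
  have hn0 : (n : ℝ) ≠ 0 := by positivity
  rw [lap_of_eventuallyEq (a := 1 / (2 * R)) (b := 1 / (2 * n * R ^ 3))
    (c := ((n : ℝ) - 1) * M) (norm_pos_iff.mp hx)]
  · field_simp
  · filter_upwards [isOpen_ne.mem_nhds (norm_pos_iff.mp hx),
      continuous_norm.continuousAt.eventually (eventually_lt_nhds hxR)] with y hy hyR
    exact lap_phiR_inner hn M hR hy hyR

lemma bilap_phiR_outer {n : ℕ} (hn : 4 ≤ n) (M : ℝ) {R : ℝ} (hR : 0 < R)
    {x : EuclideanSpace ℝ (Fin n)} (hxR : R < ‖x‖) :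
    lap (lap (phiR n M R)) x
      = -((M + 1 / (2 * n)) * ((n : ℝ) - 1) * ((n : ℝ) - 3) / ‖x‖ ^ 3) := by
  have hn0 : (n : ℝ) ≠ 0 := by positivity
  rw [lap_of_eventuallyEq (a := 0) (b := 0)
    (c := ((n : ℝ) - 1) * (M + 1 / (2 * n))) (norm_pos_iff.mp (hR.trans hxR))]
  · ring
  · filter_upwards [continuous_norm.continuousAt.eventually (eventually_gt_nhds hxR)] with y hyR
    rw [lap_phiR_outer hn M hR hyR]
    ring

/-- Bilaplacian of the scaled multiplier in dimension `n ≥ 4`: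
`Δ²φ_R(x) = -(1/R³ + M(n-1)(n-3)/|x|³)` for `0 < |x| < R`,
`Δ²φ_R(x) = -(M + 1/(2n))(n-1)(n-3)/|x|³` for `|x| > R`; in particular
`Δ²φ_R ≤ 0` away from `|x| ∈ {0, R}`. -/
theorem bilap_phiR_dim_ge_four (n : ℕ) (hn : 4 ≤ n) (M : ℝ) (hM : 1 ≤ M)
    (R : ℝ) (hR : 0 < R) :
    (∀ x : EuclideanSpace ℝ (Fin n), 0 < ‖x‖ → ‖x‖ < R →
      lap (lap (phiR n M R)) x
        = -(1 / R ^ 3 + M * ((n : ℝ) - 1) * ((n : ℝ) - 3) / ‖x‖ ^ 3))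
    ∧ (∀ x : EuclideanSpace ℝ (Fin n), R < ‖x‖ →
      lap (lap (phiR n M R)) x
        = -((M + 1 / (2 * n)) * ((n : ℝ) - 1) * ((n : ℝ) - 3) / ‖x‖ ^ 3))
    ∧ (∀ x : EuclideanSpace ℝ (Fin n), ‖x‖ ≠ 0 → ‖x‖ ≠ R →
      lap (lap (phiR n M R)) x ≤ 0) := by
  refine ⟨fun x hx hxR => bilap_phiR_inner hn M hR hx hxR,
    fun x hxR => bilap_phiR_outer hn M hR hxR, fun x hx hxR => ?_⟩
  have hpos : 0 < ‖x‖ := lt_of_le_of_ne (norm_nonneg x) hx.symm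
  have hn4 : (4 : ℝ) ≤ n := by exact_mod_cast hn
  have h1 : (0 : ℝ) ≤ (n : ℝ) - 1 := by linarith
  have h3 : (0 : ℝ) ≤ (n : ℝ) - 3 := by linarith
  rcases lt_or_gt_of_ne hxR with h | h
  · rw [bilap_phiR_inner hn M hR hpos h]
    exact neg_nonpos.mpr (by positivity)
  · rw [bilap_phiR_outer hn M hR h]
    exact neg_nonpos.mpr (by positivity)
end
end

section
/- Weighted smoothing bilinear estimate (endpoint of Lemma 4.2, second part): Let n ≥ 3, m ≥ 2, m/2 ≤ λ ≤ m, and K > 0. Let A : ℝⁿ → ℝⁿ be continuous, let ψ : (0,∞) → ℝ be C¹ with |ψ(r)| ≤ K and |ψ'(r)| ≤ K/r for all r > 0, and let F ∈ C¹(ℝⁿ; ℝⁿ) satisfy ⟨x⟩^{m/2}|F(x)| + |DF(x)| ≤ K⟨x⟩^{λ} for all x, where |DF| is the Frobenius norm of the Jacobian matrix of F. Then there is a constant C depending only on n such that for all f, g ∈ C_c^∞(ℝⁿ; ℂ): | ∫_{ℝⁿ} ψ(|x|)·conj(f)·F·∇_A g dx | ≤ C·K²·( ‖∇_A f‖_{L²}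 + ‖⟨x⟩^{m/2} f‖_{L²} )·‖⟨x⟩^{λ−m/2} g‖_{L²}. -/
/-!
Integrating by parts moves the covariant derivative off `g`:
`∫ ψ conj f F·∇_A g = -∫ ψ F·conj(∇_A f) g - ∫ ψ (div F) conj f g - ∫ (∇(ψ(|x|))·F) conj f g`.
The first two terms are bounded by Cauchy–Schwarz, using `|F| ≤ K⟨x⟩^{λ-m/2}` and
`|DF| ≤ K⟨x⟩^{m/2}⟨x⟩^{λ-m/2}`. In the third, `|∇(ψ(|x|))| ≤ K/|x|`, and `‖f/|x|‖` is controlled by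
`‖∇_A f‖` through the magnetic Hardy inequality, which is where `n ≥ 3` enters.

The singularity at the origin is handled by replacing `ψ(|x|)` with
`damped ψ ε x = |x|²/(|x|²+ε) · ψ(|x|)`. This function is `C¹` on the whole space, bounded by `K`,
and has gradient at most `3K/√(|x|²+ε)` (`contDiff_damped`, `abs_pdR_damped_le`). It is matched by
the Hardy inequality with weight `1/(|x|²+ε)` (`magnetic_hardy`), proved by integrating `|f|²`
against `x/(|x|²+ε)`. All bounds are uniform in `ε`, one coordinate at a time
(`damped_coord_estimate`), and dominated convergence gives the claim as `ε → 0`.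
-/

open MeasureTheory Complex
open scoped BigOperators

noncomputable section

/-- The magnetic (covariant) partial derivative `(∂ₖ - i Aₖ) w`. -/
noncomputable def magD {n : ℕ} (A : EuclideanSpace ℝ (Fin n) → EuclideanSpace ℝ (Fin n))
    (k : Fin n) (w : EuclideanSpace ℝ (Fin n) → ℂ) (x : EuclideanSpace ℝ (Fin n)) : ℂ :=
  fderiv ℝ w x (EuclideanSpace.single k 1) - Complex.I * (A x k : ℂ) * w x

/-- The Japanese bracket `⟨x⟩ = (1 + |x|²)^{1/2}`. -/
noncomputable def jbr {n : ℕ} (x : EuclideanSpace ℝ (Fin n)) : ℝ :=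
  Real.sqrt (1 + ‖x‖ ^ 2)

/-- The Frobenius norm of the Jacobian matrix of a vector field. -/
noncomputable def frobJac {n : ℕ} (F : EuclideanSpace ℝ (Fin n) → EuclideanSpace ℝ (Fin n))
    (x : EuclideanSpace ℝ (Fin n)) : ℝ :=
  Real.sqrt (∑ j, ∑ k, (pdR (fun y => F y j) k x) ^ 2)

section Auxiliary

variable {n : ℕ}

/-! ### Covariant derivatives and integration by parts -/

theorem continuous_magD {A : EuclideanSpace ℝ (Fin n) → EuclideanSpace ℝ (Fin n)}
    (hA : Continuous A) (k : Fin n) {f : EuclideanSpace ℝ (Fin n) → ℂ} (hf : ContDiff ℝ 1 f) :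
    Continuous (magD A k f) := by
  have h1 : Continuous fun x => fderiv ℝ f x (EuclideanSpace.single k 1) :=
    (hf.continuous_fderiv one_ne_zero).clm_apply continuous_const
  have h2 := hf.continuous
  have h3 : Continuous fun x => A x k := (EuclideanSpace.proj (𝕜 := ℝ) k).continuous.comp hA
  unfold magD
  fun_prop

theorem continuous_pdR {G : EuclideanSpace ℝ (Fin n) → ℝ} (hG : ContDiff ℝ 1 G) (k : Fin n) :
    Continuous (pdR G k) :=
  (hG.continuous_fderiv one_ne_zero).clm_apply continuous_const

theorem hasCompactSupport_magD {A : EuclideanSpace ℝ (Fin n) → EuclideanSpace ℝ (Fin n)}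
    (k : Fin n) {f : EuclideanSpace ℝ (Fin n) → ℂ} (hf : HasCompactSupport f) :
    HasCompactSupport (magD A k f) := by
  have h1 : HasCompactSupport fun x => fderiv ℝ f x (EuclideanSpace.single k 1) :=
    hf.fderiv_apply ℝ _
  have h2 : HasCompactSupport fun x => Complex.I * (A x k : ℂ) * f x := hf.mul_left
  exact h1.sub h2

/-- Cauchy–Schwarz for continuous compactly supported functions. -/
theorem integral_mul_le_sqrt_mul_sqrt {u v : EuclideanSpace ℝ (Fin n) → ℝ}
    (hu : Continuous u) (hv : Continuous v) (hu0 : ∀ x, 0 ≤ u x) (hv0 : ∀ x, 0 ≤ v x)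
    (hcu : HasCompactSupport u) (hcv : HasCompactSupport v) :
    ∫ x, u x * v x ≤ √(∫ x, u x ^ 2) * √(∫ x, v x ^ 2) := by
  have h := integral_mul_le_Lp_mul_Lq_of_nonneg (μ := volume) (p := 2) (q := 2)
    Real.HolderConjugate.two_two (Filter.Eventually.of_forall hu0) (Filter.Eventually.of_forall hv0)
    (hu.memLp_of_hasCompactSupport hcu) (hv.memLp_of_hasCompactSupport hcv)
  simpa only [Real.rpow_two, ← Real.sqrt_eq_rpow] using h

/-- Integration by parts for the magnetic derivative against a real `C¹` weight `G`. Since `A` is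
real, the potential term is carried over to `conj f` unchanged, so only `∇_A f` and `∂ₖG` appear. -/
theorem integral_magD_by_parts {A : EuclideanSpace ℝ (Fin n) → EuclideanSpace ℝ (Fin n)}
    (hA : Continuous A) (k : Fin n) {G : EuclideanSpace ℝ (Fin n) → ℝ} (hG : ContDiff ℝ 1 G)
    {f g : EuclideanSpace ℝ (Fin n) → ℂ} (hf : ContDiff ℝ 1 f) (hg : ContDiff ℝ 1 g)
    (hcg : HasCompactSupport g) :
    ∫ x, (G x : ℂ) * (starRingEnd ℂ) (f x) * magD A k g x =
      -∫ x, ((G x : ℂ) * (starRingEnd ℂ) (magD A k f x) * g x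
        + (pdR G k x : ℂ) * (starRingEnd ℂ) (f x) * g x) := by
  set e : EuclideanSpace ℝ (Fin n) := EuclideanSpace.single k 1 with he
  set P : EuclideanSpace ℝ (Fin n) → ℂ := fun x => (G x : ℂ) * (starRingEnd ℂ) (f x) with hP
  have hdP : ∀ x, HasFDerivAt P ((G x : ℂ) • ((conjCLE : ℂ →L[ℝ] ℂ).comp (fderiv ℝ f x))
      + (starRingEnd ℂ) (f x) • (ofRealCLM.comp (fderiv ℝ G x))) x := by
    intro x
    have h1 : HasFDerivAt (fun x => (G x : ℂ)) (ofRealCLM.comp (fderiv ℝ G x)) x :=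
      ofRealCLM.hasFDerivAt.comp x (hG.differentiable one_ne_zero x).hasFDerivAt
    have h2 : HasFDerivAt (fun x => (starRingEnd ℂ) (f x))
        ((conjCLE : ℂ →L[ℝ] ℂ).comp (fderiv ℝ f x)) x :=
      (conjCLE : ℂ →L[ℝ] ℂ).hasFDerivAt.comp x (hf.differentiable one_ne_zero x).hasFDerivAt
    exact h1.mul h2
  have hdPe : ∀ x, fderiv ℝ P x e = (G x : ℂ) * (starRingEnd ℂ) (fderiv ℝ f x e)
      + (pdR G k x : ℂ) * (starRingEnd ℂ) (f x) := by
    intro x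
    rw [(hdP x).fderiv]
    simp [pdR, he, mul_comm]
  have cG := hG.continuous
  have cf := hf.continuous
  have cg := hg.continuous
  have cpd := continuous_pdR hG k
  have cP : Continuous P := by fun_prop
  have cdf : Continuous fun x => fderiv ℝ f x e :=
    (hf.continuous_fderiv one_ne_zero).clm_apply continuous_const
  have cdg : Continuous fun x => fderiv ℝ g x e :=
    (hg.continuous_fderiv one_ne_zero).clm_apply continuous_const
  have cA : Continuous fun x => A x k := (EuclideanSpace.proj (𝕜 := ℝ) k).continuous.comp hA
  have i1 : Integrable fun x => fderiv ℝ P x e * g x := by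
    simp only [hdPe]
    exact Continuous.integrable_of_hasCompactSupport (by fun_prop) hcg.mul_left
  have i2 : Integrable fun x => P x * fderiv ℝ g x e :=
    Continuous.integrable_of_hasCompactSupport (by fun_prop) (hcg.fderiv_apply ℝ e).mul_left
  have i3 : Integrable fun x => P x * g x :=
    Continuous.integrable_of_hasCompactSupport (by fun_prop) hcg.mul_left
  have i4 : Integrable fun x => P x * (I * (A x k : ℂ) * g x) :=
    Continuous.integrable_of_hasCompactSupport (by fun_prop) hcg.mul_left.mul_left
  have key := integral_mul_fderiv_eq_neg_fderiv_mul_of_integrable (v := e) i1 i2 i3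
    (fun x _ => (hdP x).differentiableAt) (fun x _ => hg.differentiable one_ne_zero x)
  calc ∫ x, (G x : ℂ) * (starRingEnd ℂ) (f x) * magD A k g x
      = ∫ x, (P x * fderiv ℝ g x e - P x * (I * (A x k : ℂ) * g x)) := by
        refine integral_congr_ae (.of_forall fun x => ?_)
        simp only [magD, hP, he]; ring
    _ = -∫ x, (fderiv ℝ P x e * g x + P x * (I * (A x k : ℂ) * g x)) := by
        rw [integral_sub i2 i4, key, integral_add i1 i4]; ring
    _ = _ := by
        congr 1
        refine integral_congr_ae (.of_forall fun x => ?_)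
        simp only [hdPe]
        simp only [hP, magD, map_sub, map_mul, conj_I, conj_ofReal, he]; ring

/-! ### Magnetic Hardy inequality -/

theorem contDiff_hardy_field {ε : ℝ} (hε : 0 < ε) (k : Fin n) :
    ContDiff ℝ 1 fun x : EuclideanSpace ℝ (Fin n) => x k / (‖x‖ ^ 2 + ε) := by
  refine ContDiff.div (EuclideanSpace.proj (𝕜 := ℝ) k).contDiff
    ((contDiff_norm_sq ℝ).add contDiff_const) fun x => by positivity

theorem pdR_hardy_field {ε : ℝ} (hε : 0 < ε) (k : Fin n) (x : EuclideanSpace ℝ (Fin n)) :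
    pdR (fun y : EuclideanSpace ℝ (Fin n) => y k / (‖y‖ ^ 2 + ε)) k x =
      1 / (‖x‖ ^ 2 + ε) - 2 * x k ^ 2 / (‖x‖ ^ 2 + ε) ^ 2 := by
  have hpos : ‖x‖ ^ 2 + ε ≠ 0 := by positivity
  have h1 : HasFDerivAt (fun y : EuclideanSpace ℝ (Fin n) => y k)
      (EuclideanSpace.proj (𝕜 := ℝ) k : EuclideanSpace ℝ (Fin n) →L[ℝ] ℝ) x :=
    (EuclideanSpace.proj (𝕜 := ℝ) k).hasFDerivAt
  have h2 : HasFDerivAt (fun y : EuclideanSpace ℝ (Fin n) => ‖y‖ ^ 2 + ε)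
      (2 • (innerSL ℝ x)) x := by
    simpa using ((hasStrictFDerivAt_norm_sq x).hasFDerivAt).add_const ε
  have h3 := h1.mul ((hasDerivAt_inv hpos).comp_hasFDerivAt x h2)
  have : pdR (fun y : EuclideanSpace ℝ (Fin n) => y k / (‖y‖ ^ 2 + ε)) k x = _ :=
    congrArg (fun L => L (EuclideanSpace.single k 1)) h3.fderiv
  rw [this]
  simp [EuclideanSpace.inner_single_right]
  ring

theorem abs_coord_div_le {ε : ℝ} (hε : 0 < ε) (k : Fin n) (x : EuclideanSpace ℝ (Fin n)) :
    |x k / (‖x‖ ^ 2 + ε)| ≤ 1 / √(‖x‖ ^ 2 + ε) := by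
  have hpos : 0 < ‖x‖ ^ 2 + ε := by positivity
  have h1 : |x k| ≤ ‖x‖ := by simpa using PiLp.norm_apply_le x k
  have h2 : ‖x‖ ≤ √(‖x‖ ^ 2 + ε) := Real.le_sqrt_of_sq_le (by linarith)
  rw [abs_div, abs_of_pos hpos, div_le_div_iff₀ hpos (Real.sqrt_pos.2 hpos)]
  nlinarith [Real.mul_self_sqrt hpos.le, Real.sqrt_nonneg (‖x‖ ^ 2 + ε)]

theorem sqrt_integral_magD_le {A : EuclideanSpace ℝ (Fin n) → EuclideanSpace ℝ (Fin n)}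
    (hA : Continuous A) (k : Fin n) {f : EuclideanSpace ℝ (Fin n) → ℂ} (hf : ContDiff ℝ 1 f)
    (hcf : HasCompactSupport f) :
    √(∫ x, ‖magD A k f x‖ ^ 2) ≤ √(∫ x, ∑ j, ‖magD A j f x‖ ^ 2) := by
  have hi : ∀ j, Integrable fun x => ‖magD A j f x‖ ^ 2 := fun j =>
    Continuous.integrable_of_hasCompactSupport ((continuous_magD hA j hf).norm.pow 2)
      ((hasCompactSupport_magD j hcf).norm.comp_left (g := fun t : ℝ => t ^ 2) (by simp))
  refine Real.sqrt_le_sqrt (integral_mono (hi k) (integrable_finsetSum _ fun j _ => hi j) fun x => ?_)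
  exact Finset.single_le_sum (f := fun j => ‖magD A j f x‖ ^ 2) (fun j _ => by positivity)
    (Finset.mem_univ k)

/-- Magnetic Hardy inequality with the regularised weight `1/(|x|²+ε)`, with a constant uniform in
`ε`. It is the integration by parts of `|f|²` against the field `x/(|x|²+ε)`, whose divergence is
at least `(n-2)/(|x|²+ε)`. -/
theorem magnetic_hardy (hn : 3 ≤ n) {A : EuclideanSpace ℝ (Fin n) → EuclideanSpace ℝ (Fin n)}
    (hA : Continuous A) {f : EuclideanSpace ℝ (Fin n) → ℂ} (hf : ContDiff ℝ 1 f)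
    (hcf : HasCompactSupport f) {ε : ℝ} (hε : 0 < ε) :
    √(∫ x, (‖f x‖ / √(‖x‖ ^ 2 + ε)) ^ 2) ≤
      2 * n * √(∫ x, ∑ j, ‖magD A j f x‖ ^ 2) := by
  have hpos : ∀ x : EuclideanSpace ℝ (Fin n), 0 < ‖x‖ ^ 2 + ε := fun x => by positivity
  set N := √(∫ x, ∑ j, ‖magD A j f x‖ ^ 2) with hN
  set H := ∫ x, (‖f x‖ / √(‖x‖ ^ 2 + ε)) ^ 2 with hH
  set G : Fin n → EuclideanSpace ℝ (Fin n) → ℝ := fun k x => x k / (‖x‖ ^ 2 + ε) with hG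
  have cf := hf.continuous
  have cG : ∀ k, ContDiff ℝ 1 (G k) := contDiff_hardy_field hε
  have cu : Continuous fun x => ‖f x‖ / √(‖x‖ ^ 2 + ε) :=
    cf.norm.div (by fun_prop) fun x => (Real.sqrt_pos.2 (hpos x)).ne'
  have su : HasCompactSupport fun x => ‖f x‖ / √(‖x‖ ^ 2 + ε) := by
    simp only [div_eq_mul_inv]; exact hcf.norm.mul_right
  have hk : ∀ k, ‖∫ x, pdR (G k) k x * ‖f x‖ ^ 2‖ ≤ 2 * (√H * N) := by
    intro k
    have cD := continuous_magD hA k hf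
    have cGk := (cG k).continuous
    have cpd := continuous_pdR (cG k) k
    have ibp := integral_magD_by_parts hA k (cG k) hf hf hcf
    have ia : Integrable fun x => (G k x : ℂ) * (starRingEnd ℂ) (magD A k f x) * f x :=
      Continuous.integrable_of_hasCompactSupport (by fun_prop) hcf.mul_left
    have ib : Integrable fun x => (pdR (G k) k x : ℂ) * (starRingEnd ℂ) (f x) * f x :=
      Continuous.integrable_of_hasCompactSupport (by fun_prop) hcf.mul_left
    rw [integral_add ia ib] at ibp
    have e1 : ((∫ x, pdR (G k) k x * ‖f x‖ ^ 2 : ℝ) : ℂ) =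
        ∫ x, (pdR (G k) k x : ℂ) * (starRingEnd ℂ) (f x) * f x := by
      rw [← integral_complex_ofReal]
      refine integral_congr_ae (.of_forall fun x => ?_)
      simp only [ofReal_mul, ofReal_pow, mul_assoc, conj_mul']
    have bound : ∀ w : EuclideanSpace ℝ (Fin n) → ℂ,
        (∀ x, ‖w x‖ = |G k x| * ‖f x‖ * ‖magD A k f x‖) → ‖∫ x, w x‖ ≤ √H * N := by
      intro w hw
      have ii : Integrable fun x => ‖f x‖ / √(‖x‖ ^ 2 + ε) * ‖magD A k f x‖ :=
        Continuous.integrable_of_hasCompactSupport (cu.mul cD.norm) su.mul_right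
      calc ‖∫ x, w x‖ ≤ ∫ x, ‖f x‖ / √(‖x‖ ^ 2 + ε) * ‖magD A k f x‖ := by
            refine norm_integral_le_of_norm_le ii (.of_forall fun x => ?_)
            rw [hw]
            have := abs_coord_div_le hε k x
            have h' : |G k x| * ‖f x‖ ≤ 1 / √(‖x‖ ^ 2 + ε) * ‖f x‖ := by gcongr
            rw [div_eq_inv_mul, ← one_div]
            gcongr
        _ ≤ √H * √(∫ x, ‖magD A k f x‖ ^ 2) :=
            integral_mul_le_sqrt_mul_sqrt cu cD.norm (fun x => by positivity)
              (fun x => by positivity) su (hasCompactSupport_magD k hcf).norm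
        _ ≤ √H * N := by gcongr; exact sqrt_integral_magD_le hA k hf hcf
    have b1 := bound (fun x => (G k x : ℂ) * (starRingEnd ℂ) (f x) * magD A k f x)
      (fun x => by simp)
    have b2 := bound (fun x => (G k x : ℂ) * (starRingEnd ℂ) (magD A k f x) * f x)
      (fun x => by simp; ring)
    rw [← Complex.norm_real, e1]
    have e2 : ∫ x, (pdR (G k) k x : ℂ) * (starRingEnd ℂ) (f x) * f x =
        -(∫ x, (G k x : ℂ) * (starRingEnd ℂ) (f x) * magD A k f x) -
          ∫ x, (G k x : ℂ) * (starRingEnd ℂ) (magD A k f x) * f x := by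
      rw [ibp]; ring
    rw [e2]
    refine (norm_sub_le _ _).trans ?_
    rw [norm_neg]
    linarith
  have ipd : ∀ k, Integrable fun x => pdR (G k) k x * ‖f x‖ ^ 2 := fun k =>
    Continuous.integrable_of_hasCompactSupport ((continuous_pdR (cG k) k).mul (cf.norm.pow 2))
      (HasCompactSupport.mul_left (hcf.norm.comp_left (g := fun t : ℝ => t ^ 2) (by simp)))
  have hdiv : H ≤ ∫ x, ∑ k, pdR (G k) k x * ‖f x‖ ^ 2 := by
    refine integral_mono ?_ (integrable_finsetSum _ fun k _ => ipd k) fun x => ?_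
    · exact Continuous.integrable_of_hasCompactSupport (cu.pow 2)
        (su.comp_left (g := fun t : ℝ => t ^ 2) (by simp))
    · simp only [hG, pdR_hardy_field hε]
      rw [← Finset.sum_mul, Finset.sum_sub_distrib, div_pow, Real.sq_sqrt (hpos x).le]
      rw [← Finset.sum_div, ← Finset.sum_div, ← Finset.mul_sum]
      have hx : ∑ k, x k ^ 2 = ‖x‖ ^ 2 := by
        rw [EuclideanSpace.norm_sq_eq]; simp
      rw [hx]
      simp only [Finset.sum_const, Finset.card_univ, Fintype.card_fin, nsmul_eq_mul]
      have hn' : (3 : ℝ) ≤ n := by exact_mod_cast hn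
      have hp := hpos x
      rw [div_eq_inv_mul]
      refine mul_le_mul_of_nonneg_right ?_ (by positivity)
      have : 2 * ‖x‖ ^ 2 / (‖x‖ ^ 2 + ε) ^ 2 ≤ 2 * (1 / (‖x‖ ^ 2 + ε)) := by
        rw [mul_one_div, div_le_div_iff₀ (by positivity) hp]
        nlinarith
      have h1 : 0 < 1 / (‖x‖ ^ 2 + ε) := by positivity
      rw [← one_div, mul_one, ← mul_one_div (n : ℝ)]
      nlinarith
  have hsum : H ≤ n * (2 * (√H * N)) := by
    rw [integral_finsetSum _ fun k _ => ipd k] at hdiv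
    refine hdiv.trans ?_
    calc _ ≤ ∑ k : Fin n, 2 * (√H * N) :=
          Finset.sum_le_sum fun k _ => (le_abs_self _).trans (hk k)
      _ = _ := by simp
  have hH0 : 0 ≤ H := integral_nonneg fun x => by positivity
  have hN0 : 0 ≤ N := Real.sqrt_nonneg _
  rcases (Real.sqrt_nonneg H).eq_or_lt with h | h
  · rw [← h]; positivity
  · have : √H * √H ≤ √H * (2 * n * N) := by rw [Real.mul_self_sqrt hH0]; linarith
    exact le_of_mul_le_mul_left this h

/-! ### The damped radial multiplier -/

/-- The radial multiplier `ψ(|x|)`, damped at the origin by the factor `|x|²/(|x|²+ε)`.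
For `ε > 0` and `ψ` bounded it vanishes to second order at `0`, whatever the value `ψ 0`. -/
def damped (ψ : ℝ → ℝ) (ε : ℝ) (x : EuclideanSpace ℝ (Fin n)) : ℝ :=
  ‖x‖ ^ 2 / (‖x‖ ^ 2 + ε) * ψ ‖x‖

theorem abs_damped_le {ψ : ℝ → ℝ} {K ε : ℝ} (hε : 0 < ε)
    (hψ : ∀ r : ℝ, 0 < r → |ψ r| ≤ K) (x : EuclideanSpace ℝ (Fin n)) :
    |damped ψ ε x| ≤ ‖x‖ ^ 2 / (‖x‖ ^ 2 + ε) * K := by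
  unfold damped
  rcases (norm_nonneg x).eq_or_lt with h | h
  · simp [← h]
  · rw [abs_mul, abs_of_nonneg (by positivity)]
    gcongr
    exact hψ _ h

theorem abs_damped_le' {ψ : ℝ → ℝ} {K ε : ℝ} (hε : 0 < ε) (hK : 0 < K)
    (hψ : ∀ r : ℝ, 0 < r → |ψ r| ≤ K) (x : EuclideanSpace ℝ (Fin n)) :
    |damped ψ ε x| ≤ K := by
  refine (abs_damped_le hε hψ x).trans (mul_le_of_le_one_left hK.le ?_)
  exact div_le_one_of_le₀ (by linarith) (by positivity)

/-- Away from the origin the damped multiplier is `C¹` with gradient `O(|x|/(|x|²+ε))`. -/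
theorem damped_away {ψ : ℝ → ℝ} {K ε : ℝ} (hε : 0 < ε) (hK : 0 < K)
    (hC : ContDiffOn ℝ 1 ψ (Set.Ioi 0))
    (hψ : ∀ r : ℝ, 0 < r → |ψ r| ≤ K) (hψ' : ∀ r : ℝ, 0 < r → |deriv ψ r| ≤ K / r)
    {x : EuclideanSpace ℝ (Fin n)} (hx : x ≠ 0) :
    ContDiffAt ℝ 1 (damped ψ ε) x ∧
      ‖fderiv ℝ (damped ψ ε) x‖ ≤ 3 * K * ‖x‖ / (‖x‖ ^ 2 + ε) := by
  have hr : 0 < ‖x‖ := norm_pos_iff.2 hx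
  have hψx : ContDiffAt ℝ 1 ψ ‖x‖ := hC.contDiffAt (Ioi_mem_nhds hr)
  have hnx : ContDiffAt ℝ 1 (fun y : EuclideanSpace ℝ (Fin n) => ‖y‖) x := contDiffAt_norm ℝ hx
  set p : ℝ → ℝ := fun r => r ^ 2 / (r ^ 2 + ε) * ψ r with hp
  have hpos : 0 < ‖x‖ ^ 2 + ε := by positivity
  have hpx : ContDiffAt ℝ 1 p ‖x‖ := by
    have h1 : ContDiffAt ℝ 1 (fun r : ℝ => r ^ 2) ‖x‖ := by fun_prop
    have h2 : ContDiffAt ℝ 1 (fun r : ℝ => r ^ 2 + ε) ‖x‖ := by fun_prop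
    exact (h1.div h2 hpos.ne').mul hψx
  refine ⟨hpx.comp x hnx, ?_⟩
  have hd : HasDerivAt p (2 * ‖x‖ * ε / (‖x‖ ^ 2 + ε) ^ 2 * ψ ‖x‖
      + ‖x‖ ^ 2 / (‖x‖ ^ 2 + ε) * deriv ψ ‖x‖) ‖x‖ := by
    have h1 : HasDerivAt (fun r : ℝ => r ^ 2) (2 * ‖x‖) ‖x‖ := by
      simpa using hasDerivAt_pow 2 ‖x‖
    have h2 := h1.div (h1.add_const ε) hpos.ne'
    have h3 := h2.mul (hψx.differentiableAt one_ne_zero).hasDerivAt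
    refine h3.congr_deriv ?_
    congr 2
    ring
  have hcomp := hd.comp_hasFDerivAt x (hnx.differentiableAt one_ne_zero).hasFDerivAt
  have heq : fderiv ℝ (damped ψ ε) x = _ := hcomp.fderiv
  rw [heq, norm_smul]
  have hn1 : ‖fderiv ℝ (fun y : EuclideanSpace ℝ (Fin n) => ‖y‖) x‖ ≤ 1 := by
    simpa using norm_fderiv_le_of_lipschitz ℝ (x₀ := x)
      (lipschitzWith_one_norm (E := EuclideanSpace ℝ (Fin n)))
  refine (mul_le_of_le_one_right (norm_nonneg _) hn1).trans ?_
  refine (abs_add_le _ _).trans ?_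
  rw [abs_mul, abs_mul, abs_of_nonneg (a := 2 * ‖x‖ * ε / (‖x‖ ^ 2 + ε) ^ 2) (by positivity),
    abs_of_nonneg (a := ‖x‖ ^ 2 / (‖x‖ ^ 2 + ε)) (by positivity)]
  have e1 : 2 * ‖x‖ * ε / (‖x‖ ^ 2 + ε) ^ 2 ≤ 2 * ‖x‖ / (‖x‖ ^ 2 + ε) := by
    rw [div_le_div_iff₀ (by positivity) hpos]
    have : ε * (‖x‖ ^ 2 + ε) ≤ (‖x‖ ^ 2 + ε) ^ 2 := by nlinarith [sq_nonneg ‖x‖]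
    nlinarith
  calc _ ≤ 2 * ‖x‖ / (‖x‖ ^ 2 + ε) * K + ‖x‖ ^ 2 / (‖x‖ ^ 2 + ε) * (K / ‖x‖) := by
        gcongr
        · exact hψ _ hr
        · exact hψ' _ hr
    _ = _ := by field_simp; ring

theorem hasFDerivAt_damped_zero {ψ : ℝ → ℝ} {K ε : ℝ} (hε : 0 < ε) (hK : 0 < K)
    (hψ : ∀ r : ℝ, 0 < r → |ψ r| ≤ K) :
    HasFDerivAt (damped ψ ε) (0 : EuclideanSpace ℝ (Fin n) →L[ℝ] ℝ) 0 := by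
  have hO : (damped ψ ε : EuclideanSpace ℝ (Fin n) → ℝ) =O[nhds 0]
      fun x => ‖x - 0‖ ^ 2 := by
    refine Asymptotics.IsBigO.of_bound (K / ε) (.of_forall fun x => ?_)
    rw [sub_zero, Real.norm_eq_abs, Real.norm_eq_abs, abs_of_nonneg (a := ‖x‖ ^ 2) (by positivity)]
    refine (abs_damped_le hε hψ x).trans ?_
    rw [div_mul_eq_mul_div, div_mul_eq_mul_div, mul_comm K]
    gcongr
    nlinarith [sq_nonneg ‖x‖]
  exact hO.hasFDerivAt (by norm_num)

theorem norm_fderiv_damped_le {ψ : ℝ → ℝ} {K ε : ℝ} (hε : 0 < ε) (hK : 0 < K)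
    (hC : ContDiffOn ℝ 1 ψ (Set.Ioi 0))
    (hψ : ∀ r : ℝ, 0 < r → |ψ r| ≤ K) (hψ' : ∀ r : ℝ, 0 < r → |deriv ψ r| ≤ K / r)
    (x : EuclideanSpace ℝ (Fin n)) :
    ‖fderiv ℝ (damped ψ ε) x‖ ≤ 3 * K * ‖x‖ / (‖x‖ ^ 2 + ε) := by
  rcases eq_or_ne x 0 with rfl | hx
  · rw [(hasFDerivAt_damped_zero hε hK hψ).fderiv]; simp
  · exact (damped_away hε hK hC hψ hψ' hx).2

theorem contDiff_damped {ψ : ℝ → ℝ} {K ε : ℝ} (hε : 0 < ε) (hK : 0 < K)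
    (hC : ContDiffOn ℝ 1 ψ (Set.Ioi 0))
    (hψ : ∀ r : ℝ, 0 < r → |ψ r| ≤ K) (hψ' : ∀ r : ℝ, 0 < r → |deriv ψ r| ≤ K / r) :
    ContDiff ℝ 1 (damped ψ ε : EuclideanSpace ℝ (Fin n) → ℝ) := by
  rw [contDiff_one_iff_fderiv]
  constructor
  · intro x
    rcases eq_or_ne x 0 with rfl | hx
    · exact (hasFDerivAt_damped_zero hε hK hψ).differentiableAt
    · exact (damped_away hε hK hC hψ hψ' hx).1.differentiableAt one_ne_zero
  · rw [continuous_iff_continuousAt]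
    intro x
    rcases eq_or_ne x 0 with rfl | hx
    · rw [ContinuousAt, (hasFDerivAt_damped_zero hε hK hψ).fderiv]
      refine squeeze_zero_norm (norm_fderiv_damped_le hε hK hC hψ hψ') ?_
      have : Continuous fun x : EuclideanSpace ℝ (Fin n) => 3 * K * ‖x‖ / (‖x‖ ^ 2 + ε) :=
        Continuous.div (by fun_prop) (by fun_prop) fun x => by positivity
      simpa using this.tendsto 0
    · exact (damped_away hε hK hC hψ hψ' hx).1.continuousAt_fderiv one_ne_zero

theorem abs_pdR_damped_le {ψ : ℝ → ℝ} {K ε : ℝ} (hε : 0 < ε) (hK : 0 < K)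
    (hC : ContDiffOn ℝ 1 ψ (Set.Ioi 0))
    (hψ : ∀ r : ℝ, 0 < r → |ψ r| ≤ K) (hψ' : ∀ r : ℝ, 0 < r → |deriv ψ r| ≤ K / r)
    (k : Fin n) (x : EuclideanSpace ℝ (Fin n)) :
    |pdR (damped ψ ε) k x| ≤ 3 * K / √(‖x‖ ^ 2 + ε) := by
  have hpos : 0 < ‖x‖ ^ 2 + ε := by positivity
  have h1 := (fderiv ℝ (damped ψ ε) x).le_opNorm (EuclideanSpace.single k (1 : ℝ))
  rw [PiLp.norm_single, norm_one, mul_one] at h1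
  refine h1.trans ((norm_fderiv_damped_le hε hK hC hψ hψ' x).trans ?_)
  have h2 : ‖x‖ ≤ √(‖x‖ ^ 2 + ε) := Real.le_sqrt_of_sq_le (by linarith)
  have h3 := Real.mul_self_sqrt hpos.le
  have h4 := Real.sqrt_pos.2 hpos
  rw [div_le_div_iff₀ hpos h4, mul_assoc]
  gcongr
  nlinarith

/-! ### Weighted estimate for one coordinate -/

theorem one_le_jbr (x : EuclideanSpace ℝ (Fin n)) : 1 ≤ jbr x :=
  Real.one_le_sqrt.2 (by nlinarith [sq_nonneg ‖x‖])

theorem continuous_jbr_rpow (p : ℝ) :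
    Continuous fun x : EuclideanSpace ℝ (Fin n) => jbr x ^ p := by
  have h : Continuous (jbr : EuclideanSpace ℝ (Fin n) → ℝ) := by unfold jbr; fun_prop
  exact h.rpow_const fun x => Or.inl (zero_lt_one.trans_le (one_le_jbr x)).ne'

theorem abs_pdR_le_frobJac (F : EuclideanSpace ℝ (Fin n) → EuclideanSpace ℝ (Fin n)) (k : Fin n)
    (x : EuclideanSpace ℝ (Fin n)) : |pdR (fun y => F y k) k x| ≤ frobJac F x := by
  refine Real.abs_le_sqrt ?_
  refine (Finset.single_le_sum (f := fun j => pdR (fun y => F y k) j x ^ 2)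
    (fun j _ => sq_nonneg _) (Finset.mem_univ k)).trans ?_
  exact Finset.single_le_sum (f := fun i => ∑ j, pdR (fun y => F y i) j x ^ 2)
    (fun i _ => Finset.sum_nonneg fun j _ => sq_nonneg _) (Finset.mem_univ k)

/-- The estimate for one coordinate of `F·∇_A g` and the damped multiplier, uniformly in `ε`. After
integration by parts the derivative falls on `f` (controlled by `|F| ≤ K⟨x⟩^{λ-m/2}`), on `F`
(controlled by `|DF| ≤ K⟨x⟩^λ`), or on the multiplier (controlled by Hardy's inequality). -/
theorem damped_coord_estimate (hn : 3 ≤ n) {m lam K ε : ℝ} (hK : 0 < K) (hε : 0 < ε)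
    {A : EuclideanSpace ℝ (Fin n) → EuclideanSpace ℝ (Fin n)} (hA : Continuous A)
    {ψ : ℝ → ℝ} (hC : ContDiffOn ℝ 1 ψ (Set.Ioi 0))
    (hψ : ∀ r : ℝ, 0 < r → |ψ r| ≤ K) (hψ' : ∀ r : ℝ, 0 < r → |deriv ψ r| ≤ K / r)
    {F : EuclideanSpace ℝ (Fin n) → EuclideanSpace ℝ (Fin n)} (hF : ContDiff ℝ 1 F)
    (hFb : ∀ x, jbr x ^ (m / 2) * ‖F x‖ + frobJac F x ≤ K * jbr x ^ lam)
    {f g : EuclideanSpace ℝ (Fin n) → ℂ} (hf : ContDiff ℝ 1 f) (hcf : HasCompactSupport f)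
    (hg : ContDiff ℝ 1 g) (hcg : HasCompactSupport g) (k : Fin n) :
    ‖∫ x, ((damped ψ ε x * F x k : ℝ) : ℂ) * (starRingEnd ℂ) (f x) * magD A k g x‖ ≤
      7 * n * K ^ 2 *
        (√(∫ x, ∑ k, ‖magD A k f x‖ ^ 2) + √(∫ x, (jbr x ^ (m / 2) * ‖f x‖) ^ 2)) *
        √(∫ x, (jbr x ^ (lam - m / 2) * ‖g x‖) ^ 2) := by
  set N := √(∫ x, ∑ k, ‖magD A k f x‖ ^ 2) with hN
  set M := √(∫ x, (jbr x ^ (m / 2) * ‖f x‖) ^ 2) with hM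
  set V := √(∫ x, (jbr x ^ (lam - m / 2) * ‖g x‖) ^ 2) with hV
  have hpos : ∀ x : EuclideanSpace ℝ (Fin n), 0 < ‖x‖ ^ 2 + ε := fun x => by positivity
  have hj : ∀ x : EuclideanSpace ℝ (Fin n), 0 < jbr x := fun x =>
    zero_lt_one.trans_le (one_le_jbr x)
  have hjp : ∀ (p : ℝ) (x : EuclideanSpace ℝ (Fin n)), 0 < jbr x ^ p := fun p x =>
    Real.rpow_pos_of_pos (hj x) p
  have hθ := contDiff_damped (n := n) hε hK hC hψ hψ'
  have hFk : ContDiff ℝ 1 fun x => F x k :=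
    (EuclideanSpace.proj (𝕜 := ℝ) k : EuclideanSpace ℝ (Fin n) →L[ℝ] ℝ).contDiff.comp hF
  have hpd : ∀ x, pdR (fun x => damped ψ ε x * F x k) k x =
      damped ψ ε x * pdR (fun y => F y k) k x + F x k * pdR (damped ψ ε) k x := by
    intro x
    have h := (hθ.differentiable one_ne_zero x).hasFDerivAt.mul
      (hFk.differentiable one_ne_zero x).hasFDerivAt
    have h' : pdR (fun x => damped ψ ε x * F x k) k x = _ :=
      congrArg (fun L => L (EuclideanSpace.single k 1)) h.fderiv
    rw [h']
    simp [pdR]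
  have hsplit : ∀ x : EuclideanSpace ℝ (Fin n),
      jbr x ^ lam = jbr x ^ (m / 2) * jbr x ^ (lam - m / 2) := fun x => by
    rw [← Real.rpow_add (hj x)]; congr 1; ring
  have hF1 : ∀ x, |F x k| ≤ K * jbr x ^ (lam - m / 2) := by
    intro x
    have h1 : |F x k| ≤ ‖F x‖ := by simpa using PiLp.norm_apply_le (F x) k
    have h2 : jbr x ^ (m / 2) * ‖F x‖ ≤ K * jbr x ^ lam :=
      (le_add_of_nonneg_right (Real.sqrt_nonneg _)).trans (hFb x)
    rw [hsplit, mul_left_comm] at h2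
    exact h1.trans (le_of_mul_le_mul_left h2 (hjp _ x))
  have hF2 : ∀ x, |pdR (fun y => F y k) k x| ≤ K * (jbr x ^ (m / 2) * jbr x ^ (lam - m / 2)) := by
    intro x
    rw [← hsplit]
    have : 0 ≤ jbr x ^ (m / 2) * ‖F x‖ := mul_nonneg (hjp _ x).le (norm_nonneg _)
    exact (abs_pdR_le_frobJac F k x).trans (by linarith [hFb x])
  set v : EuclideanSpace ℝ (Fin n) → ℝ := fun x => jbr x ^ (lam - m / 2) * ‖g x‖ with hv
  set u : EuclideanSpace ℝ (Fin n) → ℝ := fun x => jbr x ^ (m / 2) * ‖f x‖ with hu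
  set h : EuclideanSpace ℝ (Fin n) → ℝ := fun x => ‖f x‖ / √(‖x‖ ^ 2 + ε) with hh
  set d : EuclideanSpace ℝ (Fin n) → ℝ := fun x => ‖magD A k f x‖ with hd
  have cv : Continuous v := (continuous_jbr_rpow _).mul hg.continuous.norm
  have cu : Continuous u := (continuous_jbr_rpow _).mul hf.continuous.norm
  have ch : Continuous h :=
    hf.continuous.norm.div (by fun_prop) fun x => (Real.sqrt_pos.2 (hpos x)).ne'
  have cd : Continuous d := (continuous_magD hA k hf).norm
  have sv : HasCompactSupport v := hcg.norm.mul_left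
  have su : HasCompactSupport u := hcf.norm.mul_left
  have sh : HasCompactSupport h := by
    simp only [hh, div_eq_mul_inv]; exact hcf.norm.mul_right
  have sd : HasCompactSupport d := (hasCompactSupport_magD k hcf).norm
  have v0 : ∀ x, 0 ≤ v x := fun x => mul_nonneg (hjp _ x).le (norm_nonneg _)
  have u0 : ∀ x, 0 ≤ u x := fun x => mul_nonneg (hjp _ x).le (norm_nonneg _)
  have h0 : ∀ x, 0 ≤ h x := fun x => div_nonneg (norm_nonneg _) (Real.sqrt_nonneg _)
  have d0 : ∀ x, 0 ≤ d x := fun x => norm_nonneg _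
  have idv : Integrable fun x => d x * v x :=
    Continuous.integrable_of_hasCompactSupport (cd.mul cv) sd.mul_right
  have iuv : Integrable fun x => u x * v x :=
    Continuous.integrable_of_hasCompactSupport (cu.mul cv) su.mul_right
  have ihv : Integrable fun x => h x * v x :=
    Continuous.integrable_of_hasCompactSupport (ch.mul cv) sh.mul_right
  have bdv : ∫ x, d x * v x ≤ N * V :=
    (integral_mul_le_sqrt_mul_sqrt cd cv d0 v0 sd sv).trans
      (mul_le_mul_of_nonneg_right (sqrt_integral_magD_le hA k hf hcf) (Real.sqrt_nonneg _))
  have buv : ∫ x, u x * v x ≤ M * V := integral_mul_le_sqrt_mul_sqrt cu cv u0 v0 su sv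
  have bhv : ∫ x, h x * v x ≤ 2 * n * N * V :=
    (integral_mul_le_sqrt_mul_sqrt ch cv h0 v0 sh sv).trans
      (mul_le_mul_of_nonneg_right (magnetic_hardy hn hA hf hcf hε) (Real.sqrt_nonneg _))
  rw [integral_magD_by_parts hA k (hθ.mul hFk) hf hg hcg, norm_neg]
  have hpt : ‖∫ x, (((damped ψ ε x * F x k : ℝ) : ℂ) * (starRingEnd ℂ) (magD A k f x) * g x
        + (pdR (fun x => damped ψ ε x * F x k) k x : ℂ) * (starRingEnd ℂ) (f x) * g x)‖ ≤
      ∫ x, (K ^ 2 * (d x * v x) + K ^ 2 * (u x * v x) + 3 * K ^ 2 * (h x * v x)) := by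
    refine norm_integral_le_of_norm_le
      (((idv.const_mul _).add (iuv.const_mul _)).add (ihv.const_mul _)) (.of_forall fun x => ?_)
    have a1 := abs_damped_le' hε hK hψ x
    have a2 := abs_pdR_damped_le hε hK hC hψ hψ' k x
    have t1 : |damped ψ ε x| * |F x k| * d x * ‖g x‖ ≤ K ^ 2 * (d x * v x) :=
      calc _ ≤ K * (K * jbr x ^ (lam - m / 2)) * d x * ‖g x‖ := by
            have := d0 x
            gcongr
            exact hF1 x
        _ = _ := by simp only [hv]; ring
    have t2 : |damped ψ ε x| * |pdR (fun y => F y k) k x| * ‖f x‖ * ‖g x‖ ≤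
        K ^ 2 * (u x * v x) :=
      calc _ ≤ K * (K * (jbr x ^ (m / 2) * jbr x ^ (lam - m / 2))) * ‖f x‖ * ‖g x‖ := by
            gcongr
            exact hF2 x
        _ = _ := by simp only [hv, hu]; ring
    have t3 : |F x k| * |pdR (damped ψ ε) k x| * ‖f x‖ * ‖g x‖ ≤ 3 * K ^ 2 * (h x * v x) :=
      calc _ ≤ K * jbr x ^ (lam - m / 2) * (3 * K / √(‖x‖ ^ 2 + ε)) * ‖f x‖ * ‖g x‖ := by
            have := (hjp (lam - m / 2) x).le
            gcongr
            exact hF1 x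
        _ = _ := by simp only [hv, hh]; ring
    refine (norm_add_le _ _).trans ?_
    simp only [norm_mul, RCLike.norm_conj, Complex.norm_real, Real.norm_eq_abs, hpd]
    have t4 : |damped ψ ε x * pdR (fun y => F y k) k x + F x k * pdR (damped ψ ε) k x| *
        ‖f x‖ * ‖g x‖ ≤ (|damped ψ ε x| * |pdR (fun y => F y k) k x| +
          |F x k| * |pdR (damped ψ ε) k x|) * ‖f x‖ * ‖g x‖ := by
      gcongr
      exact (abs_add_le _ _).trans (by rw [abs_mul, abs_mul])
    change _ * d x * _ + _ ≤ _
    linarith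
  refine hpt.trans ?_
  have i12 : Integrable fun x => K ^ 2 * (d x * v x) + K ^ 2 * (u x * v x) :=
    (idv.const_mul _).add (iuv.const_mul _)
  rw [integral_add i12 (ihv.const_mul _),
    integral_add (idv.const_mul _) (iuv.const_mul _), integral_const_mul, integral_const_mul,
    integral_const_mul]
  have hn1 : (1 : ℝ) ≤ n := by exact_mod_cast (by omega : 1 ≤ n)
  have hN0 : 0 ≤ N := Real.sqrt_nonneg _
  have hM0 : 0 ≤ M := Real.sqrt_nonneg _
  have hV0 : 0 ≤ V := Real.sqrt_nonneg _
  calc _ ≤ K ^ 2 * (N * V) + K ^ 2 * (M * V) + 3 * K ^ 2 * (2 * n * N * V) := by gcongr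
    _ = K ^ 2 * V * (1 * N + 1 * M + 6 * n * N) := by ring
    _ ≤ K ^ 2 * V * (n * N + 7 * n * M + 6 * n * N) := by
        gcongr
        linarith
    _ = _ := by ring

end Auxiliary

/-- Weighted smoothing bilinear estimate: if `|ψ| ≤ K`, `|ψ'| ≤ K/r` and
`⟨x⟩^{m/2}|F| + |DF| ≤ K⟨x⟩^λ`, then there is `C = C(n)` with
`|∫ ψ(|x|) conj f · F·∇_A g| ≤ C K² (‖∇_A f‖ + ‖⟨x⟩^{m/2} f‖) ‖⟨x⟩^{λ-m/2} g‖`. -/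
theorem weighted_smoothing_bilinear_estimate (n : ℕ) (hn : 3 ≤ n) :
    ∃ C : ℝ, 0 < C ∧
      ∀ (m lam K : ℝ), 2 ≤ m → m / 2 ≤ lam → lam ≤ m → 0 < K →
      ∀ (A : EuclideanSpace ℝ (Fin n) → EuclideanSpace ℝ (Fin n)), Continuous A →
      ∀ (ψ : ℝ → ℝ), ContDiffOn ℝ 1 ψ (Set.Ioi 0) →
        (∀ r : ℝ, 0 < r → |ψ r| ≤ K) →
        (∀ r : ℝ, 0 < r → |deriv ψ r| ≤ K / r) →
      ∀ (F : EuclideanSpace ℝ (Fin n) → EuclideanSpace ℝ (Fin n)), ContDiff ℝ 1 F →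
        (∀ x, jbr x ^ (m / 2) * ‖F x‖ + frobJac F x ≤ K * jbr x ^ lam) →
      ∀ (f g : EuclideanSpace ℝ (Fin n) → ℂ),
        ContDiff ℝ (⊤ : ℕ∞) f → HasCompactSupport f →
        ContDiff ℝ (⊤ : ℕ∞) g → HasCompactSupport g →
        ‖∫ x : EuclideanSpace ℝ (Fin n),
            ((ψ ‖x‖ : ℝ) : ℂ) * (starRingEnd ℂ) (f x) * ∑ k, (F x k : ℂ) * magD A k g x‖
          ≤ C * K ^ 2 *
            (Real.sqrt (∫ x : EuclideanSpace ℝ (Fin n), ∑ k, ‖magD A k f x‖ ^ 2)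
              + Real.sqrt (∫ x : EuclideanSpace ℝ (Fin n), (jbr x ^ (m / 2) * ‖f x‖) ^ 2)) *
            Real.sqrt (∫ x : EuclideanSpace ℝ (Fin n),
              (jbr x ^ (lam - m / 2) * ‖g x‖) ^ 2) := by
  refine ⟨7 * n ^ 2, by positivity, ?_⟩
  intro m lam K _ _ _ hK A hA ψ hC hψ hψ' F hF hFb f g hf hcf hg hcg
  have hf1 : ContDiff ℝ 1 f := hf.of_le (by exact_mod_cast le_top)
  have hg1 : ContDiff ℝ 1 g := hg.of_le (by exact_mod_cast le_top)
  have cF : ∀ k, Continuous fun x => F x k := fun k =>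
    (EuclideanSpace.proj (𝕜 := ℝ) k : EuclideanSpace ℝ (Fin n) →L[ℝ] ℝ).continuous.comp
      hF.continuous
  have cD : ∀ k, Continuous (magD A k g) := fun k => continuous_magD hA k hg1
  have cf := hf1.continuous
  set S : EuclideanSpace ℝ (Fin n) → ℂ := fun x => ∑ k, (F x k : ℂ) * magD A k g x with hS
  have cS : Continuous S := continuous_finsetSum _ fun k _ =>
    (continuous_ofReal.comp (cF k)).mul (cD k)
  -- the damping is removed along `ε → 0⁺`; the origin, where `ψ` is uncontrolled, is a null set
  have hlim : Filter.Tendsto (fun ε : ℝ => ∫ x : EuclideanSpace ℝ (Fin n),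
        ((damped ψ ε x : ℝ) : ℂ) * (starRingEnd ℂ) (f x) * S x) (nhdsWithin 0 (Set.Ioi 0))
      (nhds (∫ x, ((ψ ‖x‖ : ℝ) : ℂ) * (starRingEnd ℂ) (f x) * S x)) := by
    refine tendsto_integral_filter_of_dominated_convergence (fun x => K * ‖f x‖ * ‖S x‖) ?_ ?_ ?_ ?_
    · filter_upwards [self_mem_nhdsWithin] with ε hε
      have := (contDiff_damped (n := n) hε hK hC hψ hψ').continuous
      exact Continuous.aestronglyMeasurable (by fun_prop)
    · filter_upwards [self_mem_nhdsWithin] with ε hε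
      refine .of_forall fun x => ?_
      simp only [norm_mul, RCLike.norm_conj, Complex.norm_real, Real.norm_eq_abs]
      gcongr
      exact abs_damped_le' hε hK hψ x
    · exact Continuous.integrable_of_hasCompactSupport (by fun_prop)
        (HasCompactSupport.mul_right (HasCompactSupport.mul_left hcf.norm))
    · have : Nonempty (Fin n) := ⟨⟨0, by omega⟩⟩
      have : Nontrivial (EuclideanSpace ℝ (Fin n)) := inferInstance
      filter_upwards [Measure.ae_ne volume (0 : EuclideanSpace ℝ (Fin n))] with x hx
      have hr : 0 < ‖x‖ := norm_pos_iff.2 hx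
      have h1 : Filter.Tendsto (fun ε : ℝ => damped ψ ε x) (nhds 0) (nhds (ψ ‖x‖)) := by
        have : ContinuousAt (fun ε : ℝ => ‖x‖ ^ 2 / (‖x‖ ^ 2 + ε) * ψ ‖x‖) 0 :=
          (ContinuousAt.div (by fun_prop) (by fun_prop) (by positivity)).mul (by fun_prop)
        have h2 : ‖x‖ ^ 2 / (‖x‖ ^ 2 + 0) * ψ ‖x‖ = ψ ‖x‖ := by
          rw [add_zero, div_self (by positivity), one_mul]
        rw [ContinuousAt, h2] at this
        exact this
      exact (((continuous_ofReal.tendsto _).comp (h1.mono_left nhdsWithin_le_nhds)).mul_const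
        _).mul_const _
  refine le_of_tendsto hlim.norm ?_
  filter_upwards [self_mem_nhdsWithin] with ε hε
  have cθ := (contDiff_damped (n := n) hε hK hC hψ hψ').continuous
  have hsum : ∫ x, ((damped ψ ε x : ℝ) : ℂ) * (starRingEnd ℂ) (f x) * S x =
      ∑ k, ∫ x, ((damped ψ ε x * F x k : ℝ) : ℂ) * (starRingEnd ℂ) (f x) * magD A k g x := by
    rw [← integral_finsetSum]
    · refine integral_congr_ae (.of_forall fun x => ?_)
      simp only [hS, Finset.mul_sum, ofReal_mul]
      exact Finset.sum_congr rfl fun k _ => by ring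
    · intro k _
      have := cF k
      have := cD k
      exact Continuous.integrable_of_hasCompactSupport (by fun_prop)
        (hasCompactSupport_magD k hcg).mul_left
  rw [hsum]
  refine (norm_sum_le_of_le _ fun k _ =>
    damped_coord_estimate hn hK hε hA hC hψ hψ' hF hFb hf1 hcf hg1 hcg k).trans (le_of_eq ?_)
  simp only [Finset.sum_const, Finset.card_univ, Fintype.card_fin, nsmul_eq_mul]
  ring
end
end
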